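/- Let k ≥ 1, let 𝕃 be an N×N symmetric integer matrix, and let ε ∈ {1,−1}. Let 𝕃′ = 𝕃 ⊕ (ε) be the (N+1)×(N+1) block matrix extending 𝕃 by a new index with diagonal entry ε and zero off-diagonal entries. Define the signature σ(A) of a symmetric integer matrix A as the number of positive eigenvalues minus the number of negative eigenvalues of A regarded as a real symmetric matrix. Then (2k)^{−(N+1)/2} · e^{iπσ(𝕃′)/4} · Σ_{m′} exp(−(2πi/(4k)) m′^T 𝕃′ m′) = (2k)^{−N/2} · e^{iπσ(𝕃)/4} · Σ_{m} exp(−(2πi/(4k)) m^T 𝕃 m), where m′ ranges over {0,…,2k−1}^{N+1} and m over {0,…,2k−1}^N. That is, the U(1) Reshetikhin–Turaev expression is invariant under stabilization of the surgery link by a distant unknot with framing ±1 (first Kirby move). -/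

import Mathlib

open Complex Finset Matrix

/-- The signature of a symmetric integer matrix `A`, viewed as a real symmetric
matrix: the number of positive eigenvalues minus the number of negative eigenvalues. -/
noncomputable def intMatrixSignature {n : Type*} [Fintype n] [DecidableEq n]
    (A : Matrix n n ℤ) (hA : (A.map ((↑) : ℤ → ℝ)).IsHermitian) : ℤ :=
  ((Finset.univ.filter fun i => 0 < hA.eigenvalues i).card : ℤ) -
    ((Finset.univ.filter fun i => hA.eigenvalues i < 0).card : ℤ)

/-!
The expression is multiplicative under direct sums of linking matrices: the signature is additive
because characteristic polynomials multiply, and the quadratic form in the exponent splits. So it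
suffices that the `1 × 1` matrix `(±1)` has value `1`, which is the evaluation
`G = √n e^{πi/4}` of the Gauss sum `G = ∑ r < n, e^{πi r²/n}` at `n = 2k`.

For even `n`, splitting the series of Jacobi's `θ` into residue classes modulo `n`, applying Poisson
summation to each class and completing the square gives
`θ(τ + 1/n) = (-i n² τ)^{-1/2} G θ(-1/(n² τ) - 1/n)`. At `τ = i/n` this expresses `G / √n` as the
quotient of the values of `θ` at `(i + 1)/n` and `(i - 1)/n`. Under `τ ↦ -1/τ` these points become
`n(i - 1)/2` and `n(i + 1)/2`, where `θ` takes the same nonzero value, so only the quotient of the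
two automorphy factors, `e^{πi/4}`, remains.
-/

section PeriodicSums

theorem sum_range_add_of_periodic {M : Type*} [AddCommGroup M] {f : ℤ → M} {n : ℕ}
    (hf : Function.Periodic f n) (j : ℤ) :
    ∑ r ∈ range n, f (r + j) = ∑ r ∈ range n, f r := by
  have shift_one : Function.Periodic (fun j : ℤ ↦ ∑ r ∈ range n, f (r + j)) 1 := fun j ↦ by
    have hsucc := sum_range_succ (fun r : ℕ ↦ f (r + j)) n
    rw [sum_range_succ', add_comm (n : ℤ) j, hf j, Nat.cast_zero, zero_add] at hsucc
    simpa only [Nat.cast_add, Nat.cast_one, add_assoc, add_comm (1 : ℤ) j] using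
      add_right_cancel hsucc
  simpa using shift_one.int_mul_eq j

theorem tsum_int_eq_sum_range_tsum {E : Type*} [NormedAddCommGroup E] [CompleteSpace E]
    {f : ℤ → E} (hf : Summable f) {n : ℕ} (hn : n ≠ 0) :
    ∑' m, f m = ∑ r ∈ range n, ∑' l : ℤ, f (l * n + r) := by
  have : NeZero n := ⟨hn⟩
  let e : Fin n × ℤ ≃ ℤ := (Equiv.prodComm _ _).trans (Int.divModEquiv n).symm
  have hfe : Summable fun p ↦ f (e p) := e.summable_iff.mpr hf
  rw [← e.tsum_eq f, hfe.tsum_prod, tsum_fintype, sum_range]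
  rfl

end PeriodicSums

section Theta

theorem I_mul_cpow {z : ℂ} (hz : 0 < z.re) (s : ℂ) : (I * z) ^ s = I ^ s * z ^ s := by
  have hz0 : z ≠ 0 := by rintro rfl; simp at hz
  have harg := abs_lt.mp (Complex.abs_arg_lt_pi_div_two_iff.mpr (Or.inl hz))
  have hlog : Complex.log (I * z) = Complex.log I + Complex.log z := by
    refine Complex.log_mul I_ne_zero hz0 ?_
    rw [arg_I]
    constructor <;> linarith [harg.1, harg.2]
  rw [cpow_def_of_ne_zero (mul_ne_zero I_ne_zero hz0), cpow_def_of_ne_zero I_ne_zero,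
    cpow_def_of_ne_zero hz0, hlog, add_mul, Complex.exp_add]

theorem im_neg_one_div_pos {z : ℂ} (hz : 0 < z.im) : 0 < (-1 / z).im := by
  simpa [neg_div, inv_neg] using UpperHalfPlane.im_inv_neg_coe_pos ⟨z, hz⟩

theorem tsum_cexp_pi_I_mul_add_sq (x : ℂ) {σ : ℂ} (hσ : σ ≠ 0) :
    ∑' l : ℤ, cexp (Real.pi * I * (l + x) ^ 2 * σ) =
      1 / (-I * σ) ^ (1 / 2 : ℂ) * jacobiTheta₂ x (-1 / σ) := by
  have hterm (l : ℤ) : cexp (Real.pi * I * (l + x) ^ 2 * σ) =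
      cexp (Real.pi * I * x ^ 2 * σ) * jacobiTheta₂_term l (x * σ) σ := by
    rw [jacobiTheta₂_term, ← Complex.exp_add]
    ring_nf
  have hexp : cexp (Real.pi * I * x ^ 2 * σ) * cexp (-Real.pi * I * (x * σ) ^ 2 / σ) = 1 := by
    have hcancel : Real.pi * I * x ^ 2 * σ + -Real.pi * I * (x * σ) ^ 2 / σ = 0 := by
      field_simp
      ring
    rw [← Complex.exp_add, hcancel, Complex.exp_zero]
  rw [tsum_congr hterm, tsum_mul_left, ← jacobiTheta₂, jacobiTheta₂_functional_equation,
    mul_div_cancel_right₀ x hσ]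
  linear_combination (1 / (-I * σ) ^ (1 / 2 : ℂ) * jacobiTheta₂ x (-1 / σ)) * hexp

theorem periodic_jacobiTheta : Function.Periodic jacobiTheta 2 := fun τ ↦ by
  rw [add_comm, jacobiTheta_two_add]

theorem jacobiTheta_eq_jacobiTheta_neg_one_div (τ : ℂ) :
    jacobiTheta τ = 1 / (-I * τ) ^ (1 / 2 : ℂ) * jacobiTheta (-1 / τ) := by
  simpa [← jacobiTheta_eq_jacobiTheta₂] using jacobiTheta₂_functional_equation 0 τ

theorem jacobiTheta_ne_zero_of_one_le_im {τ : ℂ} (hτ : 1 ≤ τ.im) : jacobiTheta τ ≠ 0 := by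
  intro hzero
  have hbound := norm_jacobiTheta_sub_one_le (zero_lt_one.trans_le hτ)
  rw [hzero, zero_sub, norm_neg, norm_one] at hbound
  have hq : Real.exp (-Real.pi * τ.im) < 1 / 3 := by
    have hexp : 3 < Real.exp (Real.pi * τ.im) := by
      nlinarith [Real.add_one_le_exp (Real.pi * τ.im), Real.pi_gt_three]
    rw [neg_mul, Real.exp_neg, one_div]
    exact inv_strictAnti₀ (by norm_num) hexp
  rw [div_mul_eq_mul_div, le_div_iff₀ (by linarith)] at hbound
  linarith

end Theta

section QuadraticGaussSum

/-- The quadratic phase `exp (πi m² / n)`, the summand of the quadratic Gauss sum. -/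
noncomputable def quadraticPhase (n : ℕ) (m : ℤ) : ℂ :=
  cexp (Real.pi * I * m ^ 2 / n)

/-- The quadratic Gauss sum of modulus `n`, normalised as `∑ r < n, exp (πi r² / n)`. For even `n`
the summand depends only on `r` modulo `n`. -/
noncomputable def quadraticGaussSum (n : ℕ) : ℂ :=
  ∑ r ∈ range n, quadraticPhase n r

variable {n : ℕ}

theorem periodic_quadraticPhase (hn : Even n) : Function.Periodic (quadraticPhase n) n := by
  intro m
  obtain ⟨k, rfl⟩ := hn
  rcases eq_or_ne k 0 with rfl | hk
  · simp
  · have hk' : (k : ℂ) ≠ 0 := by exact_mod_cast hk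
    rw [quadraticPhase, quadraticPhase, Complex.exp_eq_exp_iff_exists_int]
    refine ⟨m + k, ?_⟩
    push_cast
    field_simp
    ring

theorem sum_quadraticPhase_mul_cexp (hn : Even n) (j : ℤ) :
    ∑ r ∈ range n, quadraticPhase n r * cexp (2 * Real.pi * I * j * (r / n)) =
      quadraticGaussSum n * cexp (-(Real.pi * I * j ^ 2 / n)) := by
  rw [quadraticGaussSum, ← sum_range_add_of_periodic (periodic_quadraticPhase hn) j, sum_mul]
  refine sum_congr rfl fun r _ ↦ ?_
  rw [quadraticPhase, quadraticPhase, ← Complex.exp_add, ← Complex.exp_add]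
  push_cast
  ring_nf

theorem sum_quadraticPhase_mul_jacobiTheta₂ (hn : Even n) {τ : ℂ} (hτ : 0 < τ.im) :
    ∑ r ∈ range n, quadraticPhase n r * jacobiTheta₂ (r / n) τ =
      quadraticGaussSum n * jacobiTheta (τ - 1 / n) := by
  have hasSum_left : HasSum
      (fun j : ℤ ↦ ∑ r ∈ range n, quadraticPhase n r * jacobiTheta₂_term j (r / n) τ)
      (∑ r ∈ range n, quadraticPhase n r * jacobiTheta₂ (r / n) τ) :=
    hasSum_sum fun r _ ↦ (hasSum_jacobiTheta₂_term (r / n) hτ).mul_left _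
  rw [← hasSum_left.tsum_eq, jacobiTheta, ← tsum_mul_left]
  refine tsum_congr fun j ↦ ?_
  simp only [jacobiTheta₂_term, Complex.exp_add, ← mul_assoc]
  rw [← sum_mul, sum_quadraticPhase_mul_cexp hn, mul_assoc, ← Complex.exp_add]
  ring_nf

theorem jacobiTheta_add_one_div (hn : Even n) (hn0 : n ≠ 0) {τ : ℂ} (hτ : 0 < τ.im) :
    jacobiTheta (τ + 1 / n) = 1 / (-I * (n ^ 2 * τ)) ^ (1 / 2 : ℂ) *
      (quadraticGaussSum n * jacobiTheta (-1 / (n ^ 2 * τ) - 1 / n)) := by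
  have hnC : (n : ℂ) ≠ 0 := by exact_mod_cast hn0
  have hτ0 : τ ≠ 0 := by rintro rfl; simp at hτ
  have hσ0 : (n : ℂ) ^ 2 * τ ≠ 0 := mul_ne_zero (pow_ne_zero 2 hnC) hτ0
  have him : 0 < (-1 / (n ^ 2 * τ)).im := by
    refine im_neg_one_div_pos ?_
    rw [← Nat.cast_pow, ← ofReal_natCast, im_ofReal_mul]
    positivity
  have hterm (r : ℕ) (l : ℤ) :
      cexp (Real.pi * I * ((l * n + r : ℤ) : ℂ) ^ 2 * (τ + 1 / n)) =
        quadraticPhase n r * cexp (Real.pi * I * (l + r / n) ^ 2 * (n ^ 2 * τ)) := by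
    have hphase : quadraticPhase n (l * n + r) = quadraticPhase n r := by
      simpa [add_comm] using (periodic_quadraticPhase hn).int_mul l r
    rw [← hphase, quadraticPhase, ← Complex.exp_add]
    congr 1
    push_cast
    field_simp
    ring
  have hsummable : Summable fun m : ℤ ↦ cexp (Real.pi * I * (m : ℂ) ^ 2 * (τ + 1 / n)) := by
    have him' : 0 < (τ + 1 / n).im := by simpa using hτ
    simpa [jacobiTheta₂_term] using (summable_jacobiTheta₂_term_iff 0 (τ + 1 / n)).mpr him'
  rw [jacobiTheta, tsum_int_eq_sum_range_tsum hsummable hn0,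
    ← sum_quadraticPhase_mul_jacobiTheta₂ hn him, mul_sum]
  refine sum_congr rfl fun r _ ↦ ?_
  rw [tsum_congr (hterm r), tsum_mul_left, tsum_cexp_pi_I_mul_add_sq _ hσ0]
  ring

theorem neg_one_div_I_add_one_div (n : ℕ) : -1 / ((I + 1) / n) = n * (I - 1) / 2 := by
  have hI : I + 1 ≠ 0 := fun h ↦ by simpa using congrArg im h
  rw [div_div_eq_mul_div, div_eq_div_iff hI two_ne_zero]
  linear_combination (-n : ℂ) * I_sq

theorem neg_one_div_I_sub_one_div (n : ℕ) : -1 / ((I - 1) / n) = n * (I + 1) / 2 := by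
  have hI : I - 1 ≠ 0 := fun h ↦ by simpa using congrArg im h
  rw [div_div_eq_mul_div, div_eq_div_iff hI two_ne_zero]
  linear_combination (-n : ℂ) * I_sq

theorem jacobiTheta_I_add_one_div (hn : Even n) (hn0 : n ≠ 0) :
    jacobiTheta ((I + 1) / n) = I ^ (1 / 2 : ℂ) * jacobiTheta ((I - 1) / n) := by
  have hnR : (0 : ℝ) < n := by positivity
  have hperiod : jacobiTheta (n * (I + 1) / 2) = jacobiTheta (n * (I - 1) / 2) := by
    obtain ⟨k, rfl⟩ := hn
    rw [← periodic_jacobiTheta.nat_mul k (((k + k : ℕ) : ℂ) * (I - 1) / 2)]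
    push_cast
    ring_nf
  have hre : 0 < (-I * ((I + 1) / n)).re := by
    have hform : -I * ((I + 1) / n) = ((1 / n : ℝ) : ℂ) * (1 - I) := by
      push_cast
      linear_combination (-1 / n : ℂ) * I_sq
    rw [hform, re_ofReal_mul]
    simpa using hnR
  have hroot : (-I * ((I - 1) / n)) ^ (1 / 2 : ℂ) =
      I ^ (1 / 2 : ℂ) * (-I * ((I + 1) / n)) ^ (1 / 2 : ℂ) := by
    rw [← I_mul_cpow hre]
    congr 1
    linear_combination (I / n : ℂ) * I_sq
  have hI : I ^ (1 / 2 : ℂ) ≠ 0 := by simp [cpow_eq_zero_iff]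
  rw [jacobiTheta_eq_jacobiTheta_neg_one_div ((I + 1) / n), neg_one_div_I_add_one_div,
    jacobiTheta_eq_jacobiTheta_neg_one_div ((I - 1) / n), neg_one_div_I_sub_one_div, hperiod, hroot]
  field_simp

theorem jacobiTheta_I_sub_one_div_ne_zero (hn : 2 ≤ n) : jacobiTheta ((I - 1) / n) ≠ 0 := by
  have hnC : (n : ℂ) ≠ 0 := by exact_mod_cast (by lia : n ≠ 0)
  have hI : I - 1 ≠ 0 := fun h ↦ by simpa using congrArg im h
  have him : 1 ≤ ((n : ℂ) * (I + 1) / 2).im := by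
    have hform : (n : ℂ) * (I + 1) / 2 = ((n / 2 : ℝ) : ℂ) * (I + 1) := by push_cast; ring
    have hnR : (2 : ℝ) ≤ n := by exact_mod_cast hn
    rw [hform, im_ofReal_mul, add_im, I_im, one_im]
    linarith
  rw [jacobiTheta_eq_jacobiTheta_neg_one_div, neg_one_div_I_sub_one_div]
  refine mul_ne_zero (one_div_ne_zero ?_) (jacobiTheta_ne_zero_of_one_le_im him)
  simp [cpow_eq_zero_iff, hI, hnC]

theorem quadraticGaussSum_of_even (hn : Even n) (hn0 : n ≠ 0) :
    quadraticGaussSum n = (Real.sqrt n : ℂ) * cexp (Real.pi * I / 4) := by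
  have hnC : (n : ℂ) ≠ 0 := by exact_mod_cast hn0
  have hI : I ^ (1 / 2 : ℂ) = cexp (Real.pi * I / 4) := by
    rw [cpow_def_of_ne_zero I_ne_zero, log_I]
    ring_nf
  have hsqrt : (n : ℂ) ^ (1 / 2 : ℂ) = (Real.sqrt n : ℂ) := by
    rw [Real.sqrt_eq_rpow, ofReal_cpow (Nat.cast_nonneg n)]
    norm_num
  have hsqrt0 : (n : ℂ) ^ (1 / 2 : ℂ) ≠ 0 := by simp [cpow_eq_zero_iff, hnC]
  have him : 0 < (I / n).im := by
    rw [← ofReal_natCast, div_ofReal_im, I_im]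
    positivity
  have hscale : (n : ℂ) ^ 2 * (I / n) = n * I := by field_simp
  have hroot : -I * (n * I) = (n : ℂ) := by linear_combination (-n : ℂ) * I_sq
  have hinv : -1 / (n * I) = I / n := by
    rw [div_eq_div_iff (mul_ne_zero hnC I_ne_zero) hnC]
    linear_combination (-n : ℂ) * I_sq
  have htheta := jacobiTheta_add_one_div hn hn0 him
  rw [hscale, hroot, hinv, ← add_div, ← sub_div, jacobiTheta_I_add_one_div hn hn0] at htheta
  have hne := jacobiTheta_I_sub_one_div_ne_zero (n := n) (by obtain ⟨k, rfl⟩ := hn; lia)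
  rw [← hI, ← hsqrt]
  refine mul_right_cancel₀ hne ?_
  rw [mul_assoc, htheta]
  field_simp

end QuadraticGaussSum

section Signature

variable {m n : Type*} [Fintype m] [DecidableEq m] [Fintype n] [DecidableEq n]

theorem intMatrixSignature_eq_countP_roots_charpoly (A : Matrix n n ℤ)
    (hA : (A.map ((↑) : ℤ → ℝ)).IsHermitian) :
    intMatrixSignature A hA =
      ((A.map ((↑) : ℤ → ℝ)).charpoly.roots.countP (0 < ·) : ℤ) -
        ((A.map ((↑) : ℤ → ℝ)).charpoly.roots.countP (· < 0) : ℤ) := by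
  rw [hA.roots_charpoly_eq_eigenvalues, Multiset.countP_map, Multiset.countP_map]
  rfl

theorem intMatrixSignature_reindex (e : m ≃ n) (A : Matrix m m ℤ)
    (hA : (A.map ((↑) : ℤ → ℝ)).IsHermitian)
    (hA' : ((reindex e e A).map ((↑) : ℤ → ℝ)).IsHermitian) :
    intMatrixSignature (reindex e e A) hA' = intMatrixSignature A hA := by
  have hmap : (reindex e e A).map ((↑) : ℤ → ℝ) = reindex e e (A.map ((↑) : ℤ → ℝ)) := rfl
  simp only [intMatrixSignature_eq_countP_roots_charpoly, hmap, charpoly_reindex]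

theorem intMatrixSignature_fromBlocks (A : Matrix m m ℤ) (B : Matrix n n ℤ)
    (hA : (A.map ((↑) : ℤ → ℝ)).IsHermitian) (hB : (B.map ((↑) : ℤ → ℝ)).IsHermitian)
    (hAB : ((fromBlocks A 0 0 B).map ((↑) : ℤ → ℝ)).IsHermitian) :
    intMatrixSignature (fromBlocks A 0 0 B) hAB =
      intMatrixSignature A hA + intMatrixSignature B hB := by
  have hroots : ((fromBlocks A 0 0 B).map ((↑) : ℤ → ℝ)).charpoly.roots =
      (A.map ((↑) : ℤ → ℝ)).charpoly.roots + (B.map ((↑) : ℤ → ℝ)).charpoly.roots := by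
    rw [fromBlocks_map, Matrix.map_zero _ Int.cast_zero, Matrix.map_zero _ Int.cast_zero,
      charpoly_fromBlocks_zero₁₂, Polynomial.roots_mul
        (mul_ne_zero (charpoly_monic _).ne_zero (charpoly_monic _).ne_zero)]
  simp only [intMatrixSignature_eq_countP_roots_charpoly, hroots, Multiset.countP_add]
  push_cast
  ring

theorem intMatrixSignature_diagonal (d : n → ℤ)
    (hd : ((diagonal d).map ((↑) : ℤ → ℝ)).IsHermitian) :
    intMatrixSignature (diagonal d) hd = ∑ i, (d i).sign := by
  have hroots : ((diagonal d).map ((↑) : ℤ → ℝ)).charpoly.roots =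
      univ.val.map fun i ↦ (d i : ℝ) := by
    rw [diagonal_map Int.cast_zero, charpoly_diagonal,
      ← Polynomial.roots_multiset_prod_X_sub_C (univ.val.map _), Multiset.map_map]
    rfl
  rw [intMatrixSignature_eq_countP_roots_charpoly, hroots, Multiset.countP_map,
    Multiset.countP_map]
  change ((#{i | 0 < (d i : ℝ)} : ℕ) : ℤ) - (#{i | (d i : ℝ) < 0} : ℕ) = _
  rw [natCast_card_filter, natCast_card_filter, ← sum_sub_distrib]
  refine sum_congr rfl fun i _ ↦ ?_
  rcases lt_trichotomy (d i) 0 with hneg | hzero | hpos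
  · simp [hneg, hneg.not_gt, Int.sign_eq_neg_one_of_neg hneg]
  · simp [hzero]
  · simp [hpos, hpos.not_gt, Int.sign_eq_one_of_pos hpos]

end Signature

section U1Invariant

variable {m n : Type*} [Fintype m] [DecidableEq m] [Fintype n] [DecidableEq n]

/-- The sum over all colourings of the surgery link with linking matrix `A` by
`{0, …, 2k - 1}` of the phases `exp (-(2πi / 4k) qᵀ A q)`. -/
noncomputable def colouringSum (k : ℕ) (A : Matrix n n ℤ) : ℂ :=
  ∑ q : n → Fin (2 * k), cexp (-(2 * Real.pi * I / (4 * (k : ℂ))) *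
    ∑ i, ∑ j, ((q i : ℕ) : ℂ) * ((A i j : ℤ) : ℂ) * ((q j : ℕ) : ℂ))

/-- The `U(1)` Reshetikhin–Turaev expression `I_k` of the surgery link with linking matrix `A`,
whose components are indexed by an arbitrary finite type. -/
noncomputable def u1Invariant (k : ℕ) (A : Matrix n n ℤ)
    (hA : (A.map ((↑) : ℤ → ℝ)).IsHermitian) : ℂ :=
  ((Real.sqrt (2 * k) : ℂ) ^ Fintype.card n)⁻¹ *
    cexp (Real.pi * I * ((intMatrixSignature A hA : ℤ) : ℂ) / 4) * colouringSum k A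

theorem colouringSum_reindex (k : ℕ) (e : m ≃ n) (A : Matrix m m ℤ) :
    colouringSum k (reindex e e A) = colouringSum k A := by
  refine Fintype.sum_equiv (e.symm.arrowCongr (Equiv.refl _)) _ _ fun q ↦ ?_
  simp [← e.sum_comp, Equiv.arrowCongr]

theorem colouringSum_fromBlocks (k : ℕ) (A : Matrix m m ℤ) (B : Matrix n n ℤ) :
    colouringSum k (fromBlocks A 0 0 B) = colouringSum k A * colouringSum k B := by
  unfold colouringSum
  rw [← (Equiv.sumArrowEquivProdArrow m n _).symm.sum_comp, Fintype.sum_prod_type, sum_mul_sum]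
  refine sum_congr rfl fun p _ ↦ sum_congr rfl fun q _ ↦ ?_
  rw [← Complex.exp_add, ← mul_add]
  simp [Fintype.sum_sum_type]

theorem colouringSum_neg (k : ℕ) (A : Matrix n n ℤ) :
    colouringSum k (-A) = starRingEnd ℂ (colouringSum k A) := by
  simp [colouringSum, ← exp_conj, Complex.conj_ofNat, neg_div]

theorem colouringSum_diagonal_neg_one (k : ℕ) :
    colouringSum k (diagonal fun _ : Fin 1 ↦ -1) = quadraticGaussSum (2 * k) := by
  rw [colouringSum, quadraticGaussSum, sum_range,
    ← (Equiv.funUnique (Fin 1) (Fin (2 * k))).symm.sum_comp]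
  refine sum_congr rfl fun r _ ↦ ?_
  rw [quadraticPhase]
  congr 1
  simp only [univ_unique, sum_singleton, diagonal_apply_eq, Equiv.funUnique_symm_apply,
    uniqueElim_const, Int.cast_neg, Int.cast_one, Int.cast_natCast]
  push_cast
  ring

theorem colouringSum_unknot {k : ℕ} (hk : k ≠ 0) {ε : ℤ} (hε : ε = 1 ∨ ε = -1) :
    colouringSum k (diagonal fun _ : Fin 1 ↦ ε) =
      (Real.sqrt (2 * k) : ℂ) * cexp (-(Real.pi * I * ε / 4)) := by
  have hneg : colouringSum k (diagonal fun _ : Fin 1 ↦ -1) =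
      (Real.sqrt (2 * k) : ℂ) * cexp (Real.pi * I / 4) := by
    rw [colouringSum_diagonal_neg_one, quadraticGaussSum_of_even (even_two_mul k) (by lia)]
    push_cast
    rfl
  rcases hε with rfl | rfl
  · have hdiag : diagonal (fun _ : Fin 1 ↦ (1 : ℤ)) = -diagonal fun _ ↦ -1 := by simp
    rw [hdiag, colouringSum_neg, hneg, map_mul, conj_ofReal, ← exp_conj]
    simp [Complex.conj_ofNat, neg_div]
  · rw [hneg]
    simp [neg_div]

theorem u1Invariant_reindex (k : ℕ) (e : m ≃ n) (A : Matrix m m ℤ)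
    (hA : (A.map ((↑) : ℤ → ℝ)).IsHermitian)
    (hA' : ((reindex e e A).map ((↑) : ℤ → ℝ)).IsHermitian) :
    u1Invariant k (reindex e e A) hA' = u1Invariant k A hA := by
  rw [u1Invariant, u1Invariant, intMatrixSignature_reindex e A hA, colouringSum_reindex,
    Fintype.card_congr e]

theorem u1Invariant_fromBlocks (k : ℕ) (A : Matrix m m ℤ) (B : Matrix n n ℤ)
    (hA : (A.map ((↑) : ℤ → ℝ)).IsHermitian) (hB : (B.map ((↑) : ℤ → ℝ)).IsHermitian)
    (hAB : ((fromBlocks A 0 0 B).map ((↑) : ℤ → ℝ)).IsHermitian) :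
    u1Invariant k (fromBlocks A 0 0 B) hAB = u1Invariant k A hA * u1Invariant k B hB := by
  have hphase : cexp (Real.pi * I * (intMatrixSignature A hA + intMatrixSignature B hB : ℤ) / 4) =
      cexp (Real.pi * I * (intMatrixSignature A hA : ℤ) / 4) *
        cexp (Real.pi * I * (intMatrixSignature B hB : ℤ) / 4) := by
    rw [← Complex.exp_add]
    push_cast
    ring_nf
  rw [u1Invariant, intMatrixSignature_fromBlocks A B hA hB, colouringSum_fromBlocks, hphase,
    Fintype.card_sum, pow_add, mul_inv, u1Invariant, u1Invariant]
  ring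

theorem u1Invariant_unknot {k : ℕ} (hk : k ≠ 0) {ε : ℤ} (hε : ε = 1 ∨ ε = -1)
    (h : ((diagonal fun _ : Fin 1 ↦ ε).map ((↑) : ℤ → ℝ)).IsHermitian) :
    u1Invariant k (diagonal fun _ : Fin 1 ↦ ε) h = 1 := by
  have hsign : ε.sign = ε := by rcases hε with rfl | rfl <;> rfl
  have hsqrt : (Real.sqrt (2 * k) : ℂ) ≠ 0 := by
    have : (0 : ℝ) < 2 * k := by positivity
    exact_mod_cast (Real.sqrt_pos.mpr this).ne'
  rw [u1Invariant, intMatrixSignature_diagonal, colouringSum_unknot hk hε, Complex.exp_neg]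
  simp only [univ_unique, sum_const, card_singleton, one_smul, Fintype.card_fin, pow_one, hsign]
  field_simp

end U1Invariant

theorem eq_reindex_fromBlocks_diagonal {R : Type*} [Zero R] {N : ℕ} {A : Matrix (Fin N) (Fin N) R}
    {a : R} {B : Matrix (Fin (N + 1)) (Fin (N + 1)) R}
    (hblock : ∀ i j : Fin N, B i.castSucc j.castSucc = A i j)
    (hdiag : B (Fin.last N) (Fin.last N) = a)
    (hrow : ∀ i : Fin N, B i.castSucc (Fin.last N) = 0)
    (hcol : ∀ j : Fin N, B (Fin.last N) j.castSucc = 0) :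
    B = reindex finSumFinEquiv finSumFinEquiv
      (fromBlocks A 0 0 (diagonal fun _ : Fin 1 ↦ a)) := by
  have hcast (i : Fin N) : finSumFinEquiv.symm i.castSucc = (Sum.inl i : Fin N ⊕ Fin 1) := by
    rw [Equiv.symm_apply_eq]; rfl
  have hlast : finSumFinEquiv.symm (Fin.last N) = (Sum.inr 0 : Fin N ⊕ Fin 1) := by
    rw [Equiv.symm_apply_eq]; rfl
  ext i j
  refine Fin.lastCases ?_ (fun i ↦ ?_) i <;> refine Fin.lastCases ?_ (fun j ↦ ?_) j <;>
    simp [hcast, hlast, hblock, hdiag, hrow, hcol]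

/-- Stabilization (first Kirby move) invariance of the `U(1)` Reshetikhin–Turaev
expression: extending the `N × N` symmetric integer linking matrix `𝕃` by a distant
unknot with framing `ε = ±1` (a new index with diagonal entry `ε` and zero
off-diagonal entries) leaves the quantity
`(2k)^{-N/2} e^{iπσ(𝕃)/4} Σ_m exp(-(2πi/(4k)) mᵀ𝕃m)` unchanged, where the sum runs
over all colour assignments with values in `{0,…,2k-1}` and `σ` is the signature. -/
theorem kirby_stabilization_invariance (k N : ℕ) (hk : 1 ≤ k)
    (𝕃 : Matrix (Fin N) (Fin N) ℤ) (h𝕃 : 𝕃.IsSymm)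
    (ε : ℤ) (hε : ε = 1 ∨ ε = -1)
    (𝕃' : Matrix (Fin (N + 1)) (Fin (N + 1)) ℤ)
    (hblock : ∀ i j : Fin N, 𝕃' i.castSucc j.castSucc = 𝕃 i j)
    (hdiag : 𝕃' (Fin.last N) (Fin.last N) = ε)
    (hrow : ∀ i : Fin N, 𝕃' i.castSucc (Fin.last N) = 0)
    (hcol : ∀ j : Fin N, 𝕃' (Fin.last N) j.castSucc = 0)
    (hH : (𝕃.map ((↑) : ℤ → ℝ)).IsHermitian)
    (hH' : (𝕃'.map ((↑) : ℤ → ℝ)).IsHermitian) :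
    ((Real.sqrt (2 * k) : ℂ) ^ (N + 1))⁻¹ *
      Complex.exp (Real.pi * Complex.I * ((intMatrixSignature 𝕃' hH' : ℤ) : ℂ) / 4) *
      (∑ m' : Fin (N + 1) → Fin (2 * k),
        Complex.exp (-(2 * Real.pi * Complex.I / (4 * (k : ℂ))) *
          (∑ i : Fin (N + 1), ∑ j : Fin (N + 1),
            ((m' i : ℕ) : ℂ) * ((𝕃' i j : ℤ) : ℂ) * ((m' j : ℕ) : ℂ)))) =
    ((Real.sqrt (2 * k) : ℂ) ^ N)⁻¹ *
      Complex.exp (Real.pi * Complex.I * ((intMatrixSignature 𝕃 hH : ℤ) : ℂ) / 4) *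
      (∑ m : Fin N → Fin (2 * k),
        Complex.exp (-(2 * Real.pi * Complex.I / (4 * (k : ℂ))) *
          (∑ i : Fin N, ∑ j : Fin N,
            ((m i : ℕ) : ℂ) * ((𝕃 i j : ℤ) : ℂ) * ((m j : ℕ) : ℂ)))) := by
  have hsum := eq_reindex_fromBlocks_diagonal hblock hdiag hrow hcol
  have hunknot : ((diagonal fun _ : Fin 1 ↦ ε).map ((↑) : ℤ → ℝ)).IsHermitian := by
    rw [diagonal_map Int.cast_zero]
    exact isHermitian_diagonal _
  have hsplit : ((fromBlocks 𝕃 0 0 (diagonal fun _ : Fin 1 ↦ ε)).map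
      ((↑) : ℤ → ℝ)).IsHermitian := by
    simpa [fromBlocks_map] using hH.fromBlocks (by simp) hunknot
  suffices u1Invariant k 𝕃' hH' = u1Invariant k 𝕃 hH by
    simpa only [u1Invariant, colouringSum, Fintype.card_fin] using this
  subst hsum
  rw [u1Invariant_reindex k _ _ hsplit, u1Invariant_fromBlocks k _ _ hH hunknot,
    u1Invariant_unknot (by lia) hε, mul_one]
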